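/- Let E ⊂ ℝⁿ be a bounded open set of width d in the xₙ-direction (i.e., E ⊂ {0 < xₙ < d}). Suppose W ∈ L_{2s} ∩ C^{1,1}_{loc}(E) attains a negative global minimum over ℝⁿ at x⁰ ∈ E, and W ≥ 0 on Eᶜ. Then there is a constant c = c(n, s) > 0 such that (−Δ)^s W(x⁰) ≤ c·W(x⁰)/d^{2s}. -/

import Mathlib

open MeasureTheory

/-- The fractional Laplacian (−Δ)^s with normalizing constant C. -/
noncomputable def fracLap (n : ℕ) (s C : ℝ)
    (W : EuclideanSpace ℝ (Fin n) → ℝ) (x : EuclideanSpace ℝ (Fin n)) : ℝ :=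
  C * ∫ y, (W x - W y) / ‖x - y‖ ^ ((n : ℝ) + 2 * s)

/-- Singular-kernel estimate at a negative global minimum in a narrow region:
(−Δ)^s W(x⁰) ≤ c·W(x⁰)/d^{2s}, with c = c(n, s) > 0. -/
theorem fracLap_narrow_region_estimate (n : ℕ) (hn : 1 ≤ n) (s Cns : ℝ)
    (hs : s ∈ Set.Ioo (0:ℝ) 1) (hCns : 0 < Cns) :
    ∃ c > (0:ℝ), ∀ (d : ℝ) (E : Set (EuclideanSpace ℝ (Fin n)))
      (W : EuclideanSpace ℝ (Fin n) → ℝ) (x0 : EuclideanSpace ℝ (Fin n)),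
      0 < d → IsOpen E → Bornology.IsBounded E →
      (∀ x ∈ E, 0 < x ⟨n-1, by omega⟩ ∧ x ⟨n-1, by omega⟩ < d) →
      Integrable (fun x => |W x| / (1 + ‖x‖ ^ ((n : ℝ) + 2 * s))) →
      Integrable (fun y => (W x0 - W y) / ‖x0 - y‖ ^ ((n : ℝ) + 2 * s)) →
      x0 ∈ E → W x0 < 0 → (∀ y, W x0 ≤ W y) → (∀ y ∉ E, 0 ≤ W y) →
      fracLap n s Cns W x0 ≤ c * W x0 / d ^ (2 * s) := by
  obtain ⟨hs0, hs1⟩ := hs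
  have hv : 0 < (volume : Measure (EuclideanSpace ℝ (Fin n))).real (Metric.ball 0 1) :=
    ENNReal.toReal_pos (Metric.measure_ball_pos _ _ one_pos).ne' measure_ball_lt_top.ne
  refine ⟨Cns * ((volume : Measure (EuclideanSpace ℝ (Fin n))).real (Metric.ball 0 1)
    / 3 ^ ((n : ℝ) + 2 * s)), by positivity, ?_⟩
  intro d E W x0 hd _ _ hE _ hint hx0 hneg hmin hout
  set v := (volume : Measure (EuclideanSpace ℝ (Fin n))).real (Metric.ball 0 1) with hvdef
  set p : ℝ := (n : ℝ) + 2 * s with hp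
  have hp0 : 0 < p := by positivity
  set i : Fin n := ⟨n-1, by omega⟩ with hi
  set z : EuclideanSpace ℝ (Fin n) := x0 + EuclideanSpace.single i (2 * d) with hz
  have hzi : z i = x0 i + 2 * d := by simp [hz]
  set B := Metric.ball z d with hB
  have hvol : (volume : Measure (EuclideanSpace ℝ (Fin n))).real B = d ^ n * v := by
    rw [hB, Measure.real, Measure.addHaar_ball_of_pos _ _ hd, ENNReal.toReal_mul,
      ENNReal.toReal_ofReal (by positivity), finrank_euclideanSpace_fin]
    rfl
  have key : ∀ y, (W x0 - W y) / ‖x0 - y‖ ^ p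
      ≤ B.indicator (fun _ => W x0 / (3 * d) ^ p) y := by
    intro y
    by_cases hy : y ∈ B
    · rw [Set.indicator_of_mem hy]
      have hyd : ‖y - z‖ < d := by simpa [hB, dist_eq_norm] using hy
      have h1 : |y i - z i| ≤ ‖y - z‖ := by
        simpa using PiLp.norm_apply_le (y - z) i
      have h2 := (abs_le.1 h1).1
      have hx := hE x0 hx0
      have hyE : y ∉ E := fun h => by
        have := (hE y h).2
        have := hx.1
        linarith
      have hne : 0 < ‖x0 - y‖ := by
        rw [norm_pos_iff, sub_ne_zero]
        rintro rfl
        exact hyE hx0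
      have hle : ‖x0 - y‖ ≤ 3 * d := by
        have h3 : ‖x0 - z‖ = 2 * d := by
          simp [hz, abs_of_pos hd]
        have h4 : ‖x0 - y‖ ≤ ‖x0 - z‖ + ‖z - y‖ := norm_sub_le_norm_sub_add_norm_sub _ _ _
        rw [norm_sub_rev z y] at h4
        linarith
      have hpow : ‖x0 - y‖ ^ p ≤ (3 * d) ^ p := Real.rpow_le_rpow hne.le hle hp0.le
      have hpos : 0 < ‖x0 - y‖ ^ p := Real.rpow_pos_of_pos hne _
      have hWy := hout y hyE
      rw [div_le_div_iff₀ hpos (by positivity)]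
      nlinarith
    · rw [Set.indicator_of_notMem hy]
      exact div_nonpos_of_nonpos_of_nonneg (by linarith [hmin y]) (by positivity)
  have hindint : Integrable (B.indicator (fun _ => W x0 / (3 * d) ^ p)) := by
    rw [integrable_indicator_iff Metric.isOpen_ball.measurableSet]
    exact integrableOn_const measure_ball_lt_top.ne
  have hI := integral_mono hint hindint key
  rw [integral_indicator Metric.isOpen_ball.measurableSet, setIntegral_const, hvol,
    smul_eq_mul] at hI
  have hI2 := mul_le_mul_of_nonneg_left hI hCns.le
  unfold fracLap
  refine hI2.trans (le_of_eq ?_)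
  rw [Real.mul_rpow (by norm_num) hd.le]
  have : d ^ p = d ^ n * d ^ (2 * s) := by
    rw [hp, Real.rpow_add hd, Real.rpow_natCast]
  rw [this]
  have h3 : (3:ℝ) ^ p ≠ 0 := by positivity
  have h4 : d ^ (2 * s) ≠ 0 := by positivity
  have h5 : d ^ n ≠ 0 := by positivity
  field_simp
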